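/- Let p = (x, x̂, A) with x ∈ U ∩ S^n, x̂ ∈ ℝ^n, and A ∈ SO(n) (AᵀA = 1, det A = 1). Then the n(n+3)/2 vectors {X_k(p)}_{k=1}^n ∪ {Y_{lk}(p)}_{1≤l<k≤n} ∪ {Z_k(p)}_{k=1}^n are linearly independent, and their span equals {v ∈ ℝ^{n+1} : ⟨v, x⟩ = 0} × ℝ^n × {A B : B ∈ M_n(ℝ), Bᵀ = −B}, i.e. the full tangent space of S^n × ℝ^n × SO(n) at p. (Consequently the rolling distribution spanned by X_1, …, X_n is bracket generating of step 3, and the kinematic system of S^n rolling over ℝ^n without twisting or slipping is completely controllable.) -/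

import Mathlib

open scoped InnerProductSpace BigOperators
open Matrix

noncomputable section

/-- `s_j(x) = ∑_{r=j}^n x_r²`. -/
def sfun (n j : ℕ) (x : EuclideanSpace ℝ (Fin (n + 1))) : ℝ :=
  ∑ r : Fin (n + 1), if j ≤ (r : ℕ) then x r ^ 2 else 0

/-- The `j`-th coordinate of `x` (read as a natural-number index, `0` out of range). -/
def coordfun (n : ℕ) (x : EuclideanSpace ℝ (Fin (n + 1))) (j : ℕ) : ℝ :=
  if h : j < n + 1 then x ⟨j, h⟩ else 0

/-- The vector field `e_j(x) = √(s_j/s_{j-1}) ( −∂_{j−1} + (x_{j−1}/s_j) Σ_{r=j}^n x_r ∂_r )`. -/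
def efun (n j : ℕ) (x : EuclideanSpace ℝ (Fin (n + 1))) : EuclideanSpace ℝ (Fin (n + 1)) :=
  WithLp.toLp 2 fun r => Real.sqrt (sfun n j x / sfun n (j - 1) x) *
    (-(if (r : ℕ) = j - 1 then 1 else 0)
      + coordfun n x (j - 1) / sfun n j x * (if j ≤ (r : ℕ) then x r else 0))

/-- `U = {x ∈ ℝ^{n+1} : x_n > 0}`. -/
def Usph (n : ℕ) : Set (EuclideanSpace ℝ (Fin (n + 1))) := {x | 0 < coordfun n x n}

/-- The unit sphere `S^n ⊂ ℝ^{n+1}`. -/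
def sph (n : ℕ) : Set (EuclideanSpace ℝ (Fin (n + 1))) :=
  {x | ∑ r : Fin (n + 1), x r ^ 2 = 1}

attribute [local instance] Matrix.normedAddCommGroup Matrix.normedSpace

/-- The ambient space of the trivialized configuration space
`Ω = U × ℝ^n × M_n(ℝ) ⊂ ℝ^{n+1} × ℝ^n × M_n(ℝ)`. -/
abbrev Conf (n : ℕ) :=
  EuclideanSpace ℝ (Fin (n + 1)) × EuclideanSpace ℝ (Fin n) × Matrix (Fin n) (Fin n) ℝ

/-- The elementary matrix `E_{ik}` with `1`-based indices `i, k`. -/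
def Emat (n i k : ℕ) : Matrix (Fin n) (Fin n) ℝ :=
  Matrix.of fun a b => if (a : ℕ) + 1 = i ∧ (b : ℕ) + 1 = k then 1 else 0

/-- The standard basis vector `ε_k` of `ℝ^n`, with a `1`-based index `k`. -/
def eps (n k : ℕ) : EuclideanSpace ℝ (Fin n) :=
  WithLp.toLp 2 fun i => if (i : ℕ) + 1 = k then 1 else 0

/-- The rolling vector field
`X_k(x, x̂, A) = (e_k(x), A ε_k, −Σ_{i=1}^{k−1} (x_{i−1}/√(s_{i−1} s_i)) A (E_{ik} − E_{ki}))`. -/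
def Xfield (n k : ℕ) : Conf n → Conf n := fun p =>
  (efun n k p.1, WithLp.toLp 2 (p.2.2.mulVec (eps n k).ofLp),
    -∑ i ∈ Finset.Icc 1 (k - 1),
      (coordfun n p.1 (i - 1) / Real.sqrt (sfun n (i - 1) p.1 * sfun n i p.1)) •
        (p.2.2 * (Emat n i k - Emat n k i)))

/-- `Y_{lk}(x, x̂, A) = (0, 0, A(E_{lk} − E_{kl}))`. -/
def Yfield (n l k : ℕ) : Conf n → Conf n := fun p =>
  (0, 0, p.2.2 * (Emat n l k - Emat n k l))

/-- `Z_k(x, x̂, A) = (0, A ε_k, 0)`. -/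
def Zfield (n k : ℕ) : Conf n → Conf n := fun p =>
  (0, WithLp.toLp 2 (p.2.2.mulVec (eps n k).ofLp), 0)

/-- The index set for the `n(n+3)/2` vectors
`{X_k}_{k=1}^n ∪ {Y_{lk}}_{1≤l<k≤n} ∪ {Z_k}_{k=1}^n` (indices are `0`-based here and shifted
by one when fed to the `1`-based fields). -/
def RollIdx (n : ℕ) := Fin n ⊕ {q : Fin n × Fin n // q.1 < q.2} ⊕ Fin n

/-- The family of vectors `{X_k(p)} ∪ {Y_{lk}(p)} ∪ {Z_k(p)}` at a point `p`. -/
def rollFam (n : ℕ) (p : Conf n) : RollIdx n → Conf n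
  | Sum.inl k => Xfield n ((k : ℕ) + 1) p
  | Sum.inr (Sum.inl q) => Yfield n ((q.1.1 : ℕ) + 1) ((q.1.2 : ℕ) + 1) p
  | Sum.inr (Sum.inr k) => Zfield n ((k : ℕ) + 1) p

lemma sfun_pos {n j : ℕ} (hj : j ≤ n) {x : EuclideanSpace ℝ (Fin (n + 1))} (hx : x ∈ Usph n) :
    0 < sfun n j x := by
  have hx' : 0 < x (Fin.last n) := by simpa [Usph, coordfun, Fin.last] using hx
  refine Finset.sum_pos' (fun r _ => by split_ifs <;> positivity) ⟨Fin.last n, by simp, ?_⟩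
  rw [if_pos (by simpa using hj)]
  positivity

lemma inner_efun_eq_zero {n : ℕ} (k : Fin n) {x : EuclideanSpace ℝ (Fin (n + 1))}
    (hx : x ∈ Usph n) : ⟪efun n (k + 1) x, x⟫_ℝ = 0 := by
  have hs : sfun n (k + 1) x ≠ 0 := (sfun_pos k.isLt hx).ne'
  have hc : coordfun n x k = x k.castSucc := by
    rw [coordfun, dif_pos (by omega)]; rfl
  have hsum : ∑ r : Fin (n + 1), x r * (if (r : ℕ) = k then 1 else 0) = x k.castSucc := by
    rw [Finset.sum_eq_single k.castSucc] <;> simp [Fin.ext_iff]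
    intro b h h'; exact absurd h' h
  have hsum' : ∑ r : Fin (n + 1), x r * (if (k : ℕ) + 1 ≤ r then x r else 0)
      = sfun n (k + 1) x := by
    refine Finset.sum_congr rfl fun r _ => ?_
    split_ifs <;> ring
  have hterm : ∀ r : Fin (n + 1), x r * efun n (k + 1) x r
      = √(sfun n (k + 1) x / sfun n k x) * (-(x r * (if (r : ℕ) = k then 1 else 0))
        + x k.castSucc / sfun n (k + 1) x *
          (x r * (if (k : ℕ) + 1 ≤ r then x r else 0))) := by
    intro r
    simp only [efun, Nat.add_sub_cancel, hc]
    ring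
  simp only [PiLp.inner_apply, RCLike.inner_apply, conj_trivial, hterm]
  rw [← Finset.mul_sum, Finset.sum_add_distrib, Finset.sum_neg_distrib, ← Finset.mul_sum,
    hsum, hsum']
  field_simp
  ring

lemma efun_apply_of_lt {n : ℕ} {k r : Fin n} (h : r < k) (x : EuclideanSpace ℝ (Fin (n + 1))) :
    efun n (k + 1) x r.castSucc = 0 := by
  have h' : (r : ℕ) < k := h
  simp only [efun, Fin.val_castSucc, Nat.add_sub_cancel]
  rw [if_neg (by omega), if_neg (by omega)]
  simp

lemma efun_apply_self_ne_zero {n : ℕ} (k : Fin n) {x : EuclideanSpace ℝ (Fin (n + 1))}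
    (hx : x ∈ Usph n) : efun n (k + 1) x k.castSucc ≠ 0 := by
  have h : 0 < √(sfun n (k + 1) x / sfun n k x) :=
    Real.sqrt_pos.2 (div_pos (sfun_pos k.isLt hx) (sfun_pos k.isLt.le hx))
  simpa [efun] using h.ne'

lemma linearIndependent_efun {n : ℕ} {x : EuclideanSpace ℝ (Fin (n + 1))} (hx : x ∈ Usph n) :
    LinearIndependent ℝ fun k : Fin n => efun n (k + 1) x := by
  rw [Fintype.linearIndependent_iff]
  intro a ha k
  induction k using WellFoundedLT.induction with
  | ind k ih =>
    have h := congrArg (fun v : EuclideanSpace ℝ (Fin (n + 1)) => v k.castSucc) ha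
    simp only [WithLp.ofLp_sum, WithLp.ofLp_smul, Finset.sum_apply, Pi.smul_apply, smul_eq_mul,
      WithLp.ofLp_zero, Pi.zero_apply] at h
    rw [Finset.sum_eq_single k ?_ (by simp)] at h
    · exact (mul_eq_zero.1 h).resolve_right (efun_apply_self_ne_zero k hx)
    · intro j _ hj
      rcases lt_or_gt_of_ne hj with hj | hj
      · rw [ih j hj, zero_mul]
      · rw [efun_apply_of_lt hj, mul_zero]

lemma span_efun {n : ℕ} {x : EuclideanSpace ℝ (Fin (n + 1))} (hx : x ∈ Usph n) :
    Submodule.span ℝ (Set.range fun k : Fin n => efun n (k + 1) x) = (ℝ ∙ x)ᗮ := by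
  have hx0 : x ≠ 0 := by
    rintro rfl
    simp [Usph, coordfun] at hx
  have : Fact (Module.finrank ℝ (EuclideanSpace ℝ (Fin (n + 1))) = n + 1) := ⟨by simp⟩
  refine Submodule.eq_of_le_of_finrank_eq ?_ ?_
  · rw [Submodule.span_le]
    rintro _ ⟨k, rfl⟩
    rw [SetLike.mem_coe, Submodule.mem_orthogonal_singleton_iff_inner_left]
    exact inner_efun_eq_zero k hx
  · rw [finrank_span_eq_card (linearIndependent_efun hx),
      Submodule.finrank_orthogonal_span_singleton (n := n) hx0, Fintype.card_fin]

lemma sum_smul_mulVec_eps {n : ℕ} (A : Matrix (Fin n) (Fin n) ℝ) (c : Fin n → ℝ) :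
    ∑ k : Fin n, c k • WithLp.toLp 2 (A *ᵥ (eps n (k + 1)).ofLp) = WithLp.toLp 2 (A *ᵥ c) := by
  ext r
  simp only [WithLp.ofLp_sum, WithLp.ofLp_smul, Finset.sum_apply, Pi.smul_apply, smul_eq_mul,
    mulVec, dotProduct, eps, add_left_inj, ← Fin.ext_iff]
  simp [mul_comm]

lemma transpose_Emat (n i k : ℕ) : (Emat n i k)ᵀ = Emat n k i := by
  ext a b
  simp [Emat, and_comm]

lemma transpose_Emat_sub (n i k : ℕ) :
    (Emat n i k - Emat n k i)ᵀ = -(Emat n i k - Emat n k i) := by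
  rw [transpose_sub, transpose_Emat, transpose_Emat, neg_sub]

/-- The skew-symmetric matrix with prescribed entries above the diagonal. -/
def skewOfUpper {n : ℕ} (b : {q : Fin n × Fin n // q.1 < q.2} → ℝ) : Matrix (Fin n) (Fin n) ℝ :=
  ∑ q, b q • (Emat n (q.1.1 + 1) (q.1.2 + 1) - Emat n (q.1.2 + 1) (q.1.1 + 1))

lemma transpose_skewOfUpper {n : ℕ} (b : {q : Fin n × Fin n // q.1 < q.2} → ℝ) :
    (skewOfUpper b)ᵀ = -skewOfUpper b := by
  simp only [skewOfUpper, transpose_sum, transpose_smul, transpose_Emat_sub, smul_neg,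
    Finset.sum_neg_distrib]

lemma skewOfUpper_apply {n : ℕ} (b : {q : Fin n × Fin n // q.1 < q.2} → ℝ)
    (q : {q : Fin n × Fin n // q.1 < q.2}) : skewOfUpper b q.1.1 q.1.2 = b q := by
  obtain ⟨⟨l, k⟩, hlk⟩ := q
  rw [skewOfUpper, Matrix.sum_apply, Finset.sum_eq_single ⟨(l, k), hlk⟩]
  · have : (l : ℕ) ≠ k := (show (l : ℕ) < k from hlk).ne
    simp [Emat, this]
  · rintro ⟨⟨l', k'⟩, h'⟩ _ hne
    have h₁ : (l : ℕ) < k := hlk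
    have h₂ : (l' : ℕ) < k' := h'
    simp only [ne_eq, Subtype.mk.injEq, Prod.mk.injEq, Fin.ext_iff] at hne
    simp only [Emat, Matrix.smul_apply, Matrix.sub_apply, of_apply, smul_eq_mul]
    rw [if_neg (by omega), if_neg (by omega)]
    simp
  · simp

lemma skewOfUpper_eq {n : ℕ} {B : Matrix (Fin n) (Fin n) ℝ} (hB : Bᵀ = -B) :
    skewOfUpper (fun q => B q.1.1 q.1.2) = B := by
  have skew : ∀ {C : Matrix (Fin n) (Fin n) ℝ}, Cᵀ = -C → ∀ i j, C j i = -C i j :=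
    fun hC i j => congrFun (congrFun hC i) j
  have hS := transpose_skewOfUpper fun q : {q : Fin n × Fin n // q.1 < q.2} => B q.1.1 q.1.2
  ext i j
  rcases lt_trichotomy i j with h | rfl | h
  · exact skewOfUpper_apply _ ⟨(i, j), h⟩
  · linarith [skew hS i i, skew hB i i]
  · rw [skew hS j i, skew hB j i]
    exact congrArg Neg.neg (skewOfUpper_apply _ ⟨(j, i), h⟩)

lemma sum_smul_Yfield {n : ℕ} (p : Conf n) (b : {q : Fin n × Fin n // q.1 < q.2} → ℝ) :
    ∑ q, b q • Yfield n (q.1.1 + 1) (q.1.2 + 1) p = (0, 0, p.2.2 * skewOfUpper b) := by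
  simp only [Yfield, skewOfUpper, Finset.mul_sum, mul_smul_comm]
  refine Prod.ext ?_ (Prod.ext ?_ ?_) <;> simp [Prod.fst_sum, Prod.snd_sum]

lemma sum_smul_Zfield {n : ℕ} (p : Conf n) (c : Fin n → ℝ) :
    ∑ k : Fin n, c k • Zfield n (k + 1) p = (0, WithLp.toLp 2 (p.2.2 *ᵥ c), 0) := by
  rw [← sum_smul_mulVec_eps]
  refine Prod.ext ?_ (Prod.ext ?_ ?_) <;> simp [Zfield, Prod.fst_sum, Prod.snd_sum]

/-- The tangent space of `S^n × ℝ^n × SO(n)` at `p`, inside the ambient space. -/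
def tangentSubmodule {n : ℕ} (p : Conf n) : Submodule ℝ (Conf n) where
  carrier := {v : Conf n | ⟪v.1, p.1⟫_ℝ = 0 ∧
    ∃ B : Matrix (Fin n) (Fin n) ℝ, Bᵀ = -B ∧ v.2.2 = p.2.2 * B}
  zero_mem' := ⟨by simp, 0, by simp, by simp⟩
  add_mem' := by
    rintro v w ⟨hv, B, hB, hvB⟩ ⟨hw, C, hC, hwC⟩
    refine ⟨by simp [inner_add_left, hv, hw], B + C, ?_, ?_⟩
    · rw [transpose_add, hB, hC, neg_add]
    · simp [hvB, hwC, mul_add]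
  smul_mem' := by
    rintro c v ⟨hv, B, hB, hvB⟩
    refine ⟨by simp [real_inner_smul_left, hv], c • B, ?_, ?_⟩
    · rw [transpose_smul, hB, smul_neg]
    · simp [hvB]

lemma Xfield_mem_tangentSubmodule {n : ℕ} {p : Conf n} (hU : p.1 ∈ Usph n) (k : Fin n) :
    Xfield n (k + 1) p ∈ tangentSubmodule p := by
  refine ⟨inner_efun_eq_zero k hU, -∑ i ∈ Finset.Icc 1 ((k : ℕ) + 1 - 1),
    (coordfun n p.1 (i - 1) / √(sfun n (i - 1) p.1 * sfun n i p.1)) •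
      (Emat n i (k + 1) - Emat n (k + 1) i), ?_, ?_⟩
  · simp only [transpose_neg, transpose_sum, transpose_smul, transpose_Emat_sub, smul_neg,
      Finset.sum_neg_distrib]
  · simp only [Xfield, mul_neg, Finset.mul_sum, mul_smul_comm]

lemma rollFam_mem_tangentSubmodule {n : ℕ} {p : Conf n} (hU : p.1 ∈ Usph n) (i : RollIdx n) :
    rollFam n p i ∈ tangentSubmodule p := by
  rcases i with k | q | k
  · exact Xfield_mem_tangentSubmodule hU k
  · exact ⟨inner_zero_left _, _, transpose_Emat_sub _ _ _, rfl⟩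
  · exact ⟨inner_zero_left _, 0, by simp, by simp [rollFam, Zfield]⟩

lemma linearIndependent_rollFam {n : ℕ} {p : Conf n} (hU : p.1 ∈ Usph n)
    (hA : p.2.2ᵀ * p.2.2 = 1) : LinearIndependent ℝ (rollFam n p) := by
  let I := Fin n ⊕ {q : Fin n × Fin n // q.1 < q.2} ⊕ Fin n
  suffices h : LinearIndependent ℝ fun i : I => rollFam n p i from h
  rw [Fintype.linearIndependent_iff]
  intro g hg
  simp only [I, Fintype.sum_sum_type, rollFam] at hg
  rw [sum_smul_Yfield p fun q => g (.inr (.inl q)),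
    sum_smul_Zfield p fun k => g (.inr (.inr k))] at hg
  have ha : ∀ k, g (.inl k) = 0 := by
    refine Fintype.linearIndependent_iff.1 (linearIndependent_efun hU) _ ?_
    simpa [Prod.fst_sum, Xfield] using congrArg Prod.fst hg
  simp only [ha, zero_smul, Finset.sum_const_zero, zero_add, Prod.mk_add_mk, add_zero,
    Prod.mk_eq_zero, true_and] at hg
  obtain ⟨hc, hb⟩ := hg
  have hb' : skewOfUpper (fun q => g (.inr (.inl q))) = 0 := by
    have := congrArg (p.2.2ᵀ * ·) hb
    simpa [← Matrix.mul_assoc, hA] using this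
  have hc' : (fun k => g (.inr (.inr k))) = 0 := by
    have := congrArg (fun v : EuclideanSpace ℝ (Fin n) => p.2.2ᵀ *ᵥ v.ofLp) hc
    simpa [mulVec_mulVec, hA] using this
  rintro (k | q | k)
  · exact ha k
  · rw [← skewOfUpper_apply (fun q => g (.inr (.inl q))) q, hb']
    rfl
  · exact congrFun hc' k

lemma span_rollFam {n : ℕ} {p : Conf n} (hU : p.1 ∈ Usph n) (hA : p.2.2ᵀ * p.2.2 = 1) :
    Submodule.span ℝ (Set.range (rollFam n p)) = tangentSubmodule p := by
  set S := Submodule.span ℝ (Set.range (rollFam n p))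
  have hmem : ∀ i, rollFam n p i ∈ S := fun i => Submodule.subset_span ⟨i, rfl⟩
  refine le_antisymm (Submodule.span_le.2 ?_) fun v hv => ?_
  · rintro _ ⟨i, rfl⟩
    exact rollFam_mem_tangentSubmodule hU i
  have hv1 : v.1 ∈ Submodule.span ℝ (Set.range fun k : Fin n => efun n (k + 1) p.1) := by
    rw [span_efun hU, Submodule.mem_orthogonal_singleton_iff_inner_left]
    exact hv.1
  obtain ⟨a, ha⟩ := (Submodule.mem_span_range_iff_exists_fun ℝ).1 hv1
  set u := ∑ k : Fin n, a k • Xfield n (k + 1) p with hu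
  have huS : u ∈ S := S.sum_mem fun k _ => S.smul_mem _ (hmem (.inl k))
  have hu1 : u.1 = v.1 := by
    rw [← ha]
    simp [hu, Prod.fst_sum, Xfield]
  have huT : u ∈ tangentSubmodule p :=
    Submodule.sum_mem _ fun k _ => Submodule.smul_mem _ _ (Xfield_mem_tangentSubmodule hU k)
  obtain ⟨-, B, hB, hvB⟩ := Submodule.sub_mem _ hv huT
  have hY : ((0, 0, p.2.2 * B) : Conf n) ∈ S := by
    rw [← skewOfUpper_eq hB, ← sum_smul_Yfield]
    exact S.sum_mem fun q _ => S.smul_mem _ (hmem (.inr (.inl q)))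
  have hA' : p.2.2 * p.2.2ᵀ = 1 := mul_eq_one_comm.1 hA
  have hZ : ((0, (v - u).2.1, 0) : Conf n) ∈ S := by
    have h : (v - u).2.1 = WithLp.toLp 2 (p.2.2 *ᵥ (p.2.2ᵀ *ᵥ (v - u).2.1.ofLp)) := by
      rw [mulVec_mulVec, hA', one_mulVec]
    rw [h, ← sum_smul_Zfield]
    exact S.sum_mem fun k _ => S.smul_mem _ (hmem (.inr (.inr k)))
  have hdecomp : v = u + ((0, 0, p.2.2 * B) + (0, (v - u).2.1, 0)) := by
    rw [← sub_eq_iff_eq_add', ← hvB]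
    refine Prod.ext ?_ (Prod.ext ?_ ?_) <;> simp [hu1]
  rw [hdecomp]
  exact S.add_mem huS (S.add_mem hY hZ)

/-- For `p = (x, x̂, A)` with `x ∈ U ∩ S^n` and `A ∈ SO(n)`, the `n(n+3)/2` vectors
`{X_k(p)}_{k=1}^n ∪ {Y_{lk}(p)}_{1≤l<k≤n} ∪ {Z_k(p)}_{k=1}^n` are linearly independent and span
`{v : ⟨v, x⟩ = 0} × ℝ^n × {AB : Bᵀ = −B}`, the full tangent space of `S^n × ℝ^n × SO(n)` at `p`. -/
theorem statement10 (n : ℕ) (hn : 1 ≤ n) (p : Conf n)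
    (hU : p.1 ∈ Usph n) (hS : p.1 ∈ sph n)
    (hA : p.2.2ᵀ * p.2.2 = 1) (hdet : p.2.2.det = 1) :
    LinearIndependent ℝ (rollFam n p) ∧
    (Submodule.span ℝ (Set.range (rollFam n p)) : Set (Conf n))
      = {v : Conf n | ⟪v.1, p.1⟫_ℝ = 0 ∧
          ∃ B : Matrix (Fin n) (Fin n) ℝ, Bᵀ = -B ∧ v.2.2 = p.2.2 * B} := by
  exact ⟨linearIndependent_rollFam hU hA, congrArg _ (span_rollFam hU hA)⟩
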